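/- Let α > 1. There exists a constant C > 0, depending only on α, such that for all real numbers b > a ≥ 1, Σ_{k=1}^∞ 1/( (k+a)^α (k+b)^α ) ≤ C a^{-(α-1)} b^{-α}. -/

import Mathlib

/-!
Since `k + b ≥ b`, the `k`-th term is at most `b ^ (-α) * (k + a) ^ (-α)`, and by the integral test
`∑_{k ≥ 1} (k + a) ^ (-α) ≤ ∫_a^∞ x ^ (-α) dx = a ^ (-(α - 1)) / (α - 1)`.
Hence `C = 1 / (α - 1)` works.
-/

open Set MeasureTheory

lemma antitoneOn_add_rpow_Ioi {a s : ℝ} (hs : s ≤ 0) :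
    AntitoneOn (fun x : ℝ => (x + a) ^ s) (Ioi (-a)) := fun _ hx _ _ hxy =>
  Real.rpow_le_rpow_of_nonpos (neg_lt_iff_pos_add.mp hx) (by gcongr) hs

lemma integral_add_rpow_Ioi_of_lt {a c s : ℝ} (hs : s < -1) (hc : -a < c) :
    ∫ x in Ioi c, (x + a) ^ s = -(c + a) ^ (s + 1) / (s + 1) := by
  have translate : ∫ x in Ioi c, (x + a) ^ s = ∫ x in Ioi (c + a), x ^ s := by
    simpa using (measurePreserving_add_right volume a).setIntegral_preimage_emb
      (measurableEmbedding_addRight a) (fun x : ℝ => x ^ s) (Ioi (c + a))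
  rw [translate, integral_Ioi_rpow_of_lt hs (neg_lt_iff_pos_add.mp hc)]

lemma summable_nat_add_one_add_rpow_of_lt {a s : ℝ} (hs : s < -1) (ha : -1 < a) :
    Summable fun k : ℕ => ((k : ℝ) + 1 + a) ^ s := by
  refine ((Real.summable_one_div_nat_add_rpow (1 + a) (-s)).mpr (by linarith)).congr fun k => ?_
  have hk : 0 < (k : ℝ) + (1 + a) := add_pos_of_nonneg_of_pos k.cast_nonneg (by linarith)
  rw [abs_of_pos hk, Real.rpow_neg hk.le, one_div, inv_inv, add_assoc]

lemma tsum_nat_add_one_add_rpow_le {a s : ℝ} (hs : s < -1) (ha : 0 < a) :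
    ∑' k : ℕ, ((k : ℝ) + 1 + a) ^ s ≤ -a ^ (s + 1) / (s + 1) := by
  have antitone : AntitoneOn (fun x : ℝ => (x + a) ^ s) (Ici 0) :=
    (antitoneOn_add_rpow_Ioi (by linarith)).mono (Ici_subset_Ioi.mpr (neg_neg_of_pos ha))
  have nonneg : ∀ x ∈ Ioi (0 : ℝ), 0 ≤ (x + a) ^ s := fun x hx =>
    Real.rpow_nonneg (add_pos hx ha).le s
  calc ∑' k : ℕ, ((k : ℝ) + 1 + a) ^ s
      = ∑' k : ℕ, (((k + 1 : ℕ) : ℝ) + a) ^ s := by push_cast; rfl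
    _ ≤ ∫ x in Ioi 0, (x + a) ^ s :=
      antitone.tsum_add_one_le_integral
        (integrableOn_add_rpow_Ioi_of_lt hs (neg_neg_of_pos ha)) nonneg
    _ = -a ^ (s + 1) / (s + 1) := by
      rw [integral_add_rpow_Ioi_of_lt hs (neg_neg_of_pos ha), zero_add]

lemma one_div_add_rpow_mul_add_rpow_le {α β a b x : ℝ} (hβ : 0 ≤ β) (hb : 0 < b) (hx : 0 ≤ x)
    (hxa : 0 ≤ x + a) :
    1 / ((x + a) ^ α * (x + b) ^ β) ≤ (x + a) ^ (-α) * b ^ (-β) :=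
  calc 1 / ((x + a) ^ α * (x + b) ^ β)
      = (x + a) ^ (-α) * (x + b) ^ (-β) := by
        rw [Real.rpow_neg hxa, Real.rpow_neg (add_nonneg hx hb.le), one_div, mul_inv]
    _ ≤ (x + a) ^ (-α) * b ^ (-β) := by
      have := Real.rpow_le_rpow_of_nonpos hb (le_add_of_nonneg_left hx) (neg_nonpos.mpr hβ)
      gcongr

theorem series_bound_I_alpha_ab_general {α β a b : ℝ} (hα : 1 < α) (hβ : 0 ≤ β) (ha : 0 < a)
    (hb : 0 < b) :
    Summable (fun k : ℕ => 1 / (((k : ℝ) + 1 + a) ^ α * ((k : ℝ) + 1 + b) ^ β)) ∧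
      ∑' k : ℕ, 1 / (((k : ℝ) + 1 + a) ^ α * ((k : ℝ) + 1 + b) ^ β) ≤
        1 / (α - 1) * a ^ (-(α - 1)) * b ^ (-β) := by
  have term_le (k : ℕ) : 1 / (((k : ℝ) + 1 + a) ^ α * ((k : ℝ) + 1 + b) ^ β) ≤
      ((k : ℝ) + 1 + a) ^ (-α) * b ^ (-β) :=
    one_div_add_rpow_mul_add_rpow_le hβ hb (by positivity) (by positivity)
  have hα' : -α < -1 := neg_lt_neg hα
  have summable_majorant : Summable fun k : ℕ => ((k : ℝ) + 1 + a) ^ (-α) * b ^ (-β) :=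
    (summable_nat_add_one_add_rpow_of_lt hα' (by linarith)).mul_right _
  have summable_terms := summable_majorant.of_nonneg_of_le (fun k => by positivity) term_le
  refine ⟨summable_terms, ?_⟩
  calc ∑' k : ℕ, 1 / (((k : ℝ) + 1 + a) ^ α * ((k : ℝ) + 1 + b) ^ β)
      ≤ ∑' k : ℕ, ((k : ℝ) + 1 + a) ^ (-α) * b ^ (-β) :=
        summable_terms.tsum_le_tsum term_le summable_majorant
    _ = (∑' k : ℕ, ((k : ℝ) + 1 + a) ^ (-α)) * b ^ (-β) := tsum_mul_right
    _ ≤ -a ^ (-α + 1) / (-α + 1) * b ^ (-β) := by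
      gcongr
      exact tsum_nat_add_one_add_rpow_le hα' ha
    _ = 1 / (α - 1) * a ^ (-(α - 1)) * b ^ (-β) := by
      rw [show -α + 1 = -(α - 1) by ring, neg_div_neg_eq, div_eq_mul_one_div, mul_comm (a ^ _)]

/-- For `α > 1` there is `C > 0` (depending only on `α`) such that for all
reals `b > a ≥ 1`, `∑_{k=1}^∞ 1/((k+a)^α (k+b)^α) ≤ C a^{-(α-1)} b^{-α}`. -/
theorem series_bound_I_alpha_ab (α : ℝ) (hα : 1 < α) :
    ∃ C : ℝ, 0 < C ∧ ∀ a b : ℝ, 1 ≤ a → a < b →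
      Summable (fun k : ℕ => 1 / ((((k : ℝ) + 1) + a) ^ α * (((k : ℝ) + 1) + b) ^ α)) ∧
      (∑' k : ℕ, 1 / ((((k : ℝ) + 1) + a) ^ α * (((k : ℝ) + 1) + b) ^ α)) ≤
        C * a ^ (-(α - 1)) * b ^ (-α) :=
  ⟨1 / (α - 1), one_div_pos.mpr (sub_pos.mpr hα), fun a b ha hab =>
    series_bound_I_alpha_ab_general hα (by linarith) (by linarith) (by linarith)⟩
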